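/- Let n ∈ ℕ and let a₁, …, aₙ be positive real numbers. Then for (Lebesgue) almost every α > 3n + 4, the equation y = a₁x₁ + ⋯ + aₙxₙ has at most finitely many non-trivial solutions (y, x₁, …, xₙ) ∈ PS(α)^{n+1}. -/

import Mathlib

open MeasureTheory

/-- The Piatetski–Shapiro set `PS(α) = {⌊n^α⌋ : n ∈ ℕ, n ≥ 1}`. -/
def PS (α : ℝ) : Set ℤ := {m : ℤ | ∃ n : ℕ, 1 ≤ n ∧ m = ⌊(n : ℝ) ^ α⌋}

/-!
Let `y = ⌊m ^ α⌋` and `xᵢ = ⌊kᵢ ^ α⌋` form a non-trivial solution. Dividing by `m ^ α`, the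
exponential sum `f(α) = ∑ aᵢ (kᵢ / m) ^ α` is within `O(m ^ (-α))` of `1`. Non-triviality forces
some `i` with `kᵢ ≠ m` whose term in `f(α)` is bounded below, and `|log (kᵢ / m)| ≥ 1 / (2m)`. As
`f` is convex with second derivative at least a constant times `m ^ (-2)` there, for each `(m, k)`
these exponents `α > t` fill a set of measure `O(m ^ (1 - t / 2))`. Only `O(m ^ n)` tuples `k` are
possible for a given `m`, so by Borel–Cantelli almost every `α > t` admits solutions for only
finitely many `m`, as soon as `n + 1 - t / 2 < -1`.
-/

open Filter Finset

section Real

lemma sq_le_four_mul_exp_sub_one_sub {x : ℝ} (hx : Real.exp x - 1 - x ≤ 1) :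
    x ^ 2 ≤ 4 * (Real.exp x - 1 - x) := by
  have hx2 : -2 ≤ x := by linarith [Real.exp_pos x]
  have hexp : Real.exp x = Real.exp (x / 2) ^ 2 := by rw [← Real.exp_nat_mul]; ring_nf
  have hsq : (x / 2 + 1) ^ 2 ≤ Real.exp (x / 2) ^ 2 :=
    pow_le_pow_left₀ (by linarith) (Real.add_one_le_exp _) 2
  linarith

lemma sqrt_div_rpow {x : ℝ} (hx : 0 ≤ x) (b t : ℝ) : √(b / x ^ t) = √b * x ^ (-(t / 2)) := by
  rw [Real.sqrt_div' b (Real.rpow_nonneg hx t), Real.sqrt_eq_rpow (x ^ t), ← Real.rpow_mul hx,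
    Real.rpow_neg hx, mul_one_div, div_eq_mul_inv]

lemma inv_two_mul_le_abs_log_div {k m : ℕ} (hk : 0 < k) (hm : 0 < m) (hkm : k ≠ m) :
    (2 * m : ℝ)⁻¹ ≤ |Real.log (k / m)| := by
  have hk' : (0 : ℝ) < k := by exact_mod_cast hk
  have hm' : (1 : ℝ) ≤ m := by exact_mod_cast hm
  rcases hkm.lt_or_gt with hlt | hgt
  · have hlt' : (k : ℝ) + 1 ≤ m := by exact_mod_cast hlt
    calc (2 * m : ℝ)⁻¹ ≤ (m : ℝ)⁻¹ := by gcongr; linarith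
      _ ≤ 1 - k / m := by field_simp; linarith
      _ ≤ -Real.log (k / m) := by
        linarith [Real.log_le_sub_one_of_pos (show (0 : ℝ) < k / m by positivity)]
      _ ≤ |Real.log (k / m)| := neg_le_abs _
  · have hgt' : (m : ℝ) + 1 ≤ k := by exact_mod_cast hgt
    calc (2 * m : ℝ)⁻¹ ≤ ((m : ℝ) + 1)⁻¹ := by gcongr; linarith
      _ = 1 - m / ((m : ℝ) + 1) := by field_simp; ring
      _ ≤ 1 - m / (k : ℝ) := by gcongr
      _ = 1 - ((k : ℝ) / m)⁻¹ := by rw [inv_div]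
      _ ≤ Real.log (k / m) := Real.one_sub_inv_le_log_of_pos (by positivity)
      _ ≤ |Real.log (k / m)| := le_abs_self _

lemma exists_pos_forall_lt_imp_add_le {β : Type*} [Finite β] (g : β → ℝ) (y : ℝ) :
    ∃ δ > 0, ∀ b, g b < y → g b + δ ≤ y := by
  have hgap (b : β) : ∀ᶠ δ in nhdsWithin (0 : ℝ) (Set.Ioi 0), g b < y → g b + δ ≤ y := by
    by_cases hb : g b < y
    · filter_upwards [Ioo_mem_nhdsGT (sub_pos.mpr hb)] with δ hδ _
      linarith [hδ.2]
    · exact Eventually.of_forall fun _ h => absurd h hb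
  obtain ⟨δ, hδ, hpos⟩ := ((eventually_all.mpr hgap).and self_mem_nhdsWithin).exists
  exact ⟨δ, hpos, hδ⟩

end Real

section Measure

lemma volume_le_ofReal_of_forall_sub_le {S : Set ℝ} {D : ℝ}
    (hS : ∀ p ∈ S, ∀ q ∈ S, p ≤ q → q - p ≤ D) : volume S ≤ ENNReal.ofReal D := by
  refine (Real.volume_le_diam S).trans (Metric.ediam_le fun p hp q hq => ?_)
  rw [edist_dist, Real.dist_eq]
  refine ENNReal.ofReal_le_ofReal ?_
  rcases le_total p q with hpq | hqp
  · simpa only [abs_sub_comm p q, abs_of_nonneg (sub_nonneg.mpr hpq)] using hS p hp q hq hpq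
  · simpa only [abs_of_nonneg (sub_nonneg.mpr hqp)] using hS q hq p hp hqp

/- The function `G` plays the role of the derivative: its sign says in which direction from `p` the
set `S` is known to be short. -/
lemma volume_le_of_forall_abs_sub_le {S : Set ℝ} (G : ℝ → ℝ) {D : ℝ}
    (hS : ∀ p ∈ S, ∀ q ∈ S, 0 ≤ G p * (q - p) → |q - p| ≤ D) :
    volume S ≤ 2 * ENNReal.ofReal D := by
  have hnonneg : volume (S ∩ {x | 0 ≤ G x}) ≤ ENNReal.ofReal D :=
    volume_le_ofReal_of_forall_sub_le fun p hp q hq hpq =>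
      (le_abs_self _).trans (hS p hp.1 q hq.1 (mul_nonneg hp.2 (sub_nonneg.mpr hpq)))
  have hneg : volume (S \ {x | 0 ≤ G x}) ≤ ENNReal.ofReal D :=
    volume_le_ofReal_of_forall_sub_le fun p hp q hq hpq => by
      have hGq : G q ≤ 0 := (not_le.mp hq.2).le
      rw [← neg_sub p q]
      exact (neg_le_abs _).trans
        (hS q hq.1 p hp.1 (mul_nonneg_of_nonpos_of_nonpos hGq (sub_nonpos.mpr hpq)))
  calc volume S ≤ volume (S ∩ {x | 0 ≤ G x}) + volume (S \ {x | 0 ≤ G x}) :=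
        measure_le_inter_add_sdiff _ _ _
    _ ≤ 2 * ENNReal.ofReal D := by rw [two_mul]; exact add_le_add hnonneg hneg

lemma ae_eventually_notMem_of_eventually_measure_le {X : Type*} [MeasurableSpace X]
    {μ : Measure X} {s : ℕ → Set X} {g : ℕ → ℝ} (hg : Summable g)
    (hs : ∀ᶠ m in atTop, μ (s m) ≤ ENNReal.ofReal (g m)) :
    ∀ᵐ x ∂μ, ∀ᶠ m in atTop, x ∉ s m := by
  obtain ⟨N, hN⟩ := eventually_atTop.mp hs
  have hsum : ∑' m, μ (s (m + N)) ≠ ⊤ :=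
    ne_top_of_le_ne_top ((summable_nat_add_iff N).mpr hg).tsum_ofReal_ne_top
      (ENNReal.tsum_le_tsum fun m => hN (m + N) (Nat.le_add_left N m))
  filter_upwards [ae_eventually_notMem hsum] with x hx
  rwa [← map_add_atTop_eq_nat N, eventually_map]

end Measure

section PowerSum

variable {ι : Type*} [Fintype ι] {a r : ι → ℝ}

/-- The exponential sum `x ↦ ∑ i, a i * r i ^ x`, viewed as a function of the exponent. -/
noncomputable def powerSum (a r : ι → ℝ) (x : ℝ) : ℝ := ∑ i, a i * r i ^ x

lemma mul_rpow_le_powerSum (ha : ∀ i, 0 ≤ a i) (hr : ∀ i, 0 ≤ r i) (x : ℝ) (i : ι) :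
    a i * r i ^ x ≤ powerSum a r x :=
  single_le_sum (f := fun i => a i * r i ^ x)
    (fun j _ => mul_nonneg (ha j) (Real.rpow_nonneg (hr j) x)) (mem_univ i)

lemma le_max_of_powerSum_le (ha : ∀ i, 0 < a i) (hr : ∀ i, 0 ≤ r i) {x B : ℝ} (hx : 1 ≤ x)
    (hB : powerSum a r x ≤ B) (i : ι) : r i ≤ max 1 (B / a i) := by
  rcases le_total (r i) 1 with hle | hge
  · exact le_max_of_le_left hle
  · refine le_max_of_le_right ((Real.self_le_rpow_of_one_le hge hx).trans ?_)
    rw [le_div_iff₀' (ha i)]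
    exact (mul_rpow_le_powerSum (fun j => (ha j).le) hr x i).trans hB

/- The left side is the error of the linear approximation at `p`, since
`powerSum (fun i => a i * Real.log (r i)) r` is the derivative of `powerSum a r`. -/
lemma powerSum_sub_powerSum_sub (hr : ∀ i, 0 < r i) (p q : ℝ) :
    powerSum a r q - powerSum a r p - powerSum (fun i => a i * Real.log (r i)) r p * (q - p) =
      ∑ i, a i * r i ^ p *
        (Real.exp (Real.log (r i) * (q - p)) - 1 - Real.log (r i) * (q - p)) := by
  simp only [powerSum, sum_mul, ← sum_sub_distrib]
  refine sum_congr rfl fun i _ => ?_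
  have hq : r i ^ q = r i ^ p * Real.exp (Real.log (r i) * (q - p)) := by
    rw [← Real.rpow_def_of_pos (hr i), ← Real.rpow_add (hr i), add_sub_cancel]
  rw [hq]
  ring

lemma sq_log_mul_sub_le (ha : ∀ i, 0 ≤ a i) (hr : ∀ i, 0 < r i) {p q c η : ℝ}
    (hpq : powerSum a r q - powerSum a r p ≤ η)
    (hderiv : 0 ≤ powerSum (fun i => a i * Real.log (r i)) r p * (q - p))
    (hc : 0 < c) (hη : η ≤ c) {i : ι} (hi : c ≤ a i * r i ^ p) :
    (Real.log (r i) * (q - p)) ^ 2 ≤ 4 * (η / c) := by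
  set φ : ι → ℝ := fun j =>
    Real.exp (Real.log (r j) * (q - p)) - 1 - Real.log (r j) * (q - p) with hφ
  have hφ_nonneg (j : ι) : 0 ≤ φ j := by
    simp only [hφ]
    linarith [Real.add_one_le_exp (Real.log (r j) * (q - p))]
  have hterm : c * φ i ≤ η :=
    calc c * φ i ≤ a i * r i ^ p * φ i := mul_le_mul_of_nonneg_right hi (hφ_nonneg i)
      _ ≤ ∑ j, a j * r j ^ p * φ j :=
        single_le_sum (f := fun j => a j * r j ^ p * φ j) (fun j _ => mul_nonneg
          (mul_nonneg (ha j) (Real.rpow_nonneg (hr j).le p)) (hφ_nonneg j)) (mem_univ i)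
      _ ≤ η := by rw [← powerSum_sub_powerSum_sub hr]; linarith
  have hφi : φ i ≤ η / c := (le_div_iff₀' hc).mpr hterm
  calc (Real.log (r i) * (q - p)) ^ 2 ≤ 4 * φ i :=
        sq_le_four_mul_exp_sub_one_sub (hφi.trans ((div_le_one hc).mpr hη))
    _ ≤ 4 * (η / c) := by gcongr

lemma volume_abs_powerSum_sub_le (ha : ∀ i, 0 ≤ a i) (hr : ∀ i, 0 < r i) (y : ℝ) {ε c l : ℝ}
    (hc : 0 < c) (hl : 0 < l) (hε : 2 * ε ≤ c) :
    volume {x | |powerSum a r x - y| ≤ ε ∧ ∃ i, l ≤ |Real.log (r i)| ∧ c ≤ a i * r i ^ x} ≤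
      2 * ENNReal.ofReal (√(8 * ε / c) / l) := by
  refine volume_le_of_forall_abs_sub_le (powerSum (fun i => a i * Real.log (r i)) r) ?_
  rintro p ⟨hp, i, hli, hci⟩ q ⟨hq, -⟩ hderiv
  have hdiff : powerSum a r q - powerSum a r p ≤ 2 * ε := by
    linarith [(abs_le.mp hp).1, (abs_le.mp hq).2]
  rw [le_div_iff₀' hl]
  refine Real.le_sqrt_of_sq_le ?_
  calc (l * |q - p|) ^ 2 ≤ (|Real.log (r i)| * |q - p|) ^ 2 := by gcongr
    _ = (Real.log (r i) * (q - p)) ^ 2 := by rw [← abs_mul, sq_abs]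
    _ ≤ 4 * (2 * ε / c) := sq_log_mul_sub_le ha hr hdiff hderiv hc hε hci
    _ = 8 * ε / c := by ring

lemma exists_notMem_le_mul_rpow {J : Finset ι} (hJ : ∀ i ∈ J, r i = 1) {x c : ℝ} (hc : 0 < c)
    (hgap : ∑ i ∈ J, a i + (Fintype.card ι + 2) * c ≤ 1)
    (hx : |powerSum a r x - 1| ≤ c) : ∃ i ∉ J, c ≤ a i * r i ^ x := by
  classical
  have hsum_J : ∑ i ∈ J, a i * r i ^ x = ∑ i ∈ J, a i :=
    sum_congr rfl fun i hi => by rw [hJ i hi, Real.one_rpow, mul_one]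
  have hsplit : ∑ i ∈ J, a i * r i ^ x + ∑ i ∈ Jᶜ, a i * r i ^ x = powerSum a r x :=
    sum_add_sum_compl J _
  have hcard : (#Jᶜ : ℝ) * c ≤ Fintype.card ι * c := by
    gcongr
    exact card_le_univ _
  have hlt : ∑ _i ∈ Jᶜ, c < ∑ i ∈ Jᶜ, a i * r i ^ x := by
    rw [sum_const, nsmul_eq_mul]
    linarith [(abs_le.mp hx).1]
  obtain ⟨i, hi, hci⟩ := exists_lt_of_sum_lt hlt
  exact ⟨i, mem_compl.mp hi, hci.le⟩

end PowerSum

section LinearEquation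

variable {ι : Type*} [Fintype ι] {a : ι → ℝ}

lemma abs_sum_mul_sub_le_of_floor_eq (ha : ∀ i, 0 ≤ a i) {u : ι → ℝ} {v : ℝ}
    (h : (⌊v⌋ : ℝ) = ∑ i, a i * (⌊u i⌋ : ℝ)) : |∑ i, a i * u i - v| ≤ 1 + ∑ i, a i := by
  have hfloor : ∑ i, a i * u i - v = ∑ i, a i * Int.fract (u i) - Int.fract v := by
    simp only [← Int.self_sub_floor, mul_sub, sum_sub_distrib, ← h]
    ring
  have hnonneg : 0 ≤ ∑ i, a i * Int.fract (u i) :=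
    sum_nonneg fun i _ => mul_nonneg (ha i) (Int.fract_nonneg _)
  have hle : ∑ i, a i * Int.fract (u i) ≤ ∑ i, a i :=
    sum_le_sum fun i _ => mul_le_of_le_one_right (ha i) (Int.fract_lt_one _).le
  rw [hfloor, abs_le]
  constructor <;> linarith [Int.fract_nonneg v, Int.fract_lt_one v]

lemma sum_lt_one_of_forall_mem_eq (ha : ∀ i, 0 < a i) {x : ι → ℝ} {y : ℝ} (hx : ∀ i, 0 < x i)
    (hy : 0 < y) (hxy : y = ∑ i, a i * x i) (hne : ¬(∑ i, a i = 1 ∧ ∀ i, x i = y))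
    {J : Finset ι} (hJ : ∀ i ∈ J, x i = y) : ∑ i ∈ J, a i < 1 := by
  have hsum_J : ∑ i ∈ J, a i * x i = (∑ i ∈ J, a i) * y := by
    rw [sum_mul]
    exact sum_congr rfl fun i hi => by rw [hJ i hi]
  by_cases hJuniv : J = univ
  · subst hJuniv
    have hone : ∑ i, a i = 1 := by
      rw [← hxy] at hsum_J
      exact (mul_eq_right₀ hy.ne').mp hsum_J.symm
    exact absurd ⟨hone, fun i => hJ i (mem_univ i)⟩ hne
  · obtain ⟨i, hi⟩ : ∃ i, i ∉ J := by
      simpa only [eq_univ_iff_forall, not_forall] using hJuniv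
    have hlt : ∑ i ∈ J, a i * x i < ∑ i, a i * x i :=
      sum_lt_sum_of_subset (subset_univ J) (mem_univ i) hi (mul_pos (ha i) (hx i))
        fun j _ _ => (mul_pos (ha j) (hx j)).le
    rw [hsum_J, ← hxy] at hlt
    exact (mul_lt_iff_lt_one_left hy).mp hlt

lemma finite_setOf_nonneg_eq_sum_mul (ha : ∀ i, 0 < a i) (y : ℝ) :
    {x : ι → ℤ | (∀ i, 0 ≤ x i) ∧ y = ∑ i, a i * (x i : ℝ)}.Finite := by
  refine (Set.Finite.pi fun i => Set.finite_Icc (0 : ℤ) ⌊y / a i⌋).subset ?_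
  rintro x ⟨hx, rfl⟩ i -
  refine ⟨hx i, Int.le_floor.mpr ?_⟩
  rw [le_div_iff₀' (ha i)]
  exact single_le_sum (f := fun i => a i * (x i : ℝ))
    (fun j _ => mul_nonneg (ha j).le (by exact_mod_cast hx j)) (mem_univ i)

end LinearEquation

section PiatetskiShapiro

variable {ι : Type*} [Fintype ι] {a : ι → ℝ}

lemma one_le_of_mem_PS {α : ℝ} (hα : 0 ≤ α) {x : ℤ} (hx : x ∈ PS α) : 1 ≤ x := by
  obtain ⟨k, hk, rfl⟩ := hx
  refine Int.le_floor.mpr ?_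
  rw [Int.cast_one]
  exact Real.one_le_rpow (by exact_mod_cast hk) hα

/-- The non-trivial solutions `(y, x)` in `PS(α)` of the equation `y = ∑ i, a i * x i`. -/
def nontrivialSolutions (a : ι → ℝ) (α : ℝ) : Set (ℤ × (ι → ℤ)) :=
  {sol | sol.1 ∈ PS α ∧ (∀ i, sol.2 i ∈ PS α) ∧ (sol.1 : ℝ) = ∑ i, a i * (sol.2 i : ℝ) ∧
    ¬(∑ i, a i = 1 ∧ ∀ i, sol.2 i = sol.1)}

/-- The exponents `α > t` for which the bases `m` and `k i` give a non-trivial solution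
`(⌊m ^ α⌋, ⌊k i ^ α⌋)`. -/
def solutionExponents (a : ι → ℝ) (t : ℝ) (m : ℕ) (k : ι → ℕ) : Set ℝ :=
  {α | t < α ∧ (⌊(m : ℝ) ^ α⌋, fun i => ⌊(k i : ℝ) ^ α⌋) ∈ nontrivialSolutions a α}

lemma abs_powerSum_sub_one_le (ha : ∀ i, 0 ≤ a i) {t α : ℝ} {m : ℕ} (hm : 0 < m) {k : ι → ℕ}
    (hα : α ∈ solutionExponents a t m k) :
    |powerSum a (fun i => (k i : ℝ) / m) α - 1| ≤ (1 + ∑ i, a i) / (m : ℝ) ^ t := by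
  obtain ⟨htα, -, -, heq, -⟩ := hα
  have hm' : (1 : ℝ) ≤ m := by exact_mod_cast hm
  have hmα : 0 < (m : ℝ) ^ α := by positivity
  have hrescale : powerSum a (fun i => (k i : ℝ) / m) α - 1 =
      (∑ i, a i * (k i : ℝ) ^ α - (m : ℝ) ^ α) / (m : ℝ) ^ α := by
    rw [sub_div, div_self hmα.ne', sum_div, powerSum]
    simp only [Real.div_rpow (Nat.cast_nonneg _) (Nat.cast_nonneg _), mul_div_assoc]
  rw [hrescale, abs_div, abs_of_pos hmα]
  have hnonneg : 0 ≤ ∑ i, a i := sum_nonneg fun i _ => ha i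
  gcongr
  exact abs_sum_mul_sub_le_of_floor_eq ha heq

lemma exists_pos_forall_exists_ne_le_mul_rpow (ha : ∀ i, 0 < a i) {t : ℝ} (ht : 0 ≤ t) :
    ∃ c > 0, ∀ m : ℕ, 0 < m → ∀ k, ∀ α ∈ solutionExponents a t m k,
      |powerSum a (fun i => (k i : ℝ) / m) α - 1| ≤ c →
        ∃ i, k i ≠ m ∧ c ≤ a i * ((k i : ℝ) / m) ^ α := by
  obtain ⟨δ, hδ, hgap⟩ := exists_pos_forall_lt_imp_add_le (fun J : Finset ι => ∑ i ∈ J, a i) 1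
  refine ⟨δ / (Fintype.card ι + 2), by positivity, fun m hm k α hα hclose => ?_⟩
  obtain ⟨htα, hy, hx, heq, hne⟩ := hα
  have hpos {z : ℤ} (hz : z ∈ PS α) : (0 : ℝ) < z := by
    exact_mod_cast one_le_of_mem_PS (ht.trans htα.le) hz
  set J : Finset ι := univ.filter fun i => k i = m
  have hJ : ∑ i ∈ J, a i < 1 := by
    refine sum_lt_one_of_forall_mem_eq ha (fun i => hpos (hx i)) (hpos hy) heq
      (by exact_mod_cast hne) fun i hi => ?_
    simp only [(mem_filter.mp hi).2]
  obtain ⟨i, hiJ, hi⟩ := exists_notMem_le_mul_rpow (J := J) (r := fun i => (k i : ℝ) / m)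
    (fun i hi => by rw [(mem_filter.mp hi).2, div_self (by positivity)]) (by positivity)
    (by rw [mul_div_cancel₀ _ (by positivity)]; exact hgap J hJ) hclose
  exact ⟨i, fun hik => hiJ (mem_filter.mpr ⟨mem_univ i, hik⟩), hi⟩

lemma eventually_div_rpow_le (C : ℝ) {c t : ℝ} (hc : 0 < c) (ht : 0 < t) :
    ∀ᶠ m : ℕ in atTop, C / (m : ℝ) ^ t ≤ c :=
  (((tendsto_rpow_atTop ht).comp tendsto_natCast_atTop_atTop).const_div_atTop C).eventually_le_const
    hc

lemma exists_eventually_volume_solutionExponents_le (ha : ∀ i, 0 < a i) {t : ℝ} (ht : 0 < t) :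
    ∃ E, ∀ᶠ m : ℕ in atTop, ∀ k : ι → ℕ, (∀ i, 0 < k i) →
      volume (solutionExponents a t m k) ≤ ENNReal.ofReal (E * (m : ℝ) ^ (1 - t / 2)) := by
  obtain ⟨c, hc, hlarge⟩ := exists_pos_forall_exists_ne_le_mul_rpow ha ht.le
  set C := 1 + ∑ i, a i
  refine ⟨4 * √(8 * C / c), ?_⟩
  filter_upwards [eventually_gt_atTop 0, eventually_div_rpow_le C (half_pos hc) ht]
    with m hm hmC k hk
  have hm' : (0 : ℝ) < m := by exact_mod_cast hm
  have hsubset : solutionExponents a t m k ⊆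
      {x | |powerSum a (fun i => (k i : ℝ) / m) x - 1| ≤ C / (m : ℝ) ^ t ∧
        ∃ i, (2 * m : ℝ)⁻¹ ≤ |Real.log (k i / m)| ∧ c ≤ a i * ((k i : ℝ) / m) ^ x} := by
    intro α hα
    have hclose := abs_powerSum_sub_one_le (fun i => (ha i).le) hm hα
    obtain ⟨i, hkm, hi⟩ := hlarge m hm k α hα (hclose.trans (by linarith))
    exact ⟨hclose, i, inv_two_mul_le_abs_log_div (hk i) hm hkm, hi⟩
  have hsqrt : √(8 * (C / (m : ℝ) ^ t) / c) = √(8 * C / c) * (m : ℝ) ^ (-(t / 2)) := by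
    rw [mul_div_assoc', div_right_comm, sqrt_div_rpow hm'.le]
  calc volume (solutionExponents a t m k)
      ≤ 2 * ENNReal.ofReal (√(8 * (C / (m : ℝ) ^ t) / c) / (2 * m : ℝ)⁻¹) :=
        (measure_mono hsubset).trans (volume_abs_powerSum_sub_le (fun i => (ha i).le)
          (fun i => div_pos (Nat.cast_pos.mpr (hk i)) hm') 1 hc (by positivity) (by linarith))
    _ = ENNReal.ofReal (4 * √(8 * C / c) * (m : ℝ) ^ (1 - t / 2)) := by
      rw [← ENNReal.ofReal_ofNat 2, ← ENNReal.ofReal_mul zero_le_two, hsqrt, sub_eq_add_neg,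
        Real.rpow_add hm', Real.rpow_one, div_inv_eq_mul]
      ring_nf

lemma exists_eventually_forall_base_le (ha : ∀ i, 0 < a i) {t : ℝ} (ht : 1 ≤ t) :
    ∃ K : ℕ, ∀ᶠ m : ℕ in atTop, ∀ k, (solutionExponents a t m k).Nonempty →
      ∀ i, k i ≤ K * m := by
  obtain ⟨B, hB⟩ := (Set.finite_range fun i => max 1 (2 / a i)).bddAbove
  obtain ⟨K, hK⟩ := exists_nat_ge B
  refine ⟨K, ?_⟩
  filter_upwards [eventually_gt_atTop 0,
    eventually_div_rpow_le (1 + ∑ i, a i) one_pos (one_pos.trans_le ht)] with m hm hmC k ⟨α, hα⟩ i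
  have hclose := abs_powerSum_sub_one_le (fun i => (ha i).le) hm hα
  have hle : powerSum a (fun i => (k i : ℝ) / m) α ≤ 2 := by linarith [(abs_le.mp hclose).2]
  have hratio : (k i : ℝ) / m ≤ K :=
    (le_max_of_powerSum_le ha (fun i => by positivity) (ht.trans hα.1.le) hle i).trans
      ((hB (Set.mem_range_self i)).trans hK)
  rw [div_le_iff₀ (by positivity)] at hratio
  exact_mod_cast hratio

lemma exists_eventually_volume_iUnion_solutionExponents_le (ha : ∀ i, 0 < a i) {t : ℝ}
    (ht : 1 ≤ t) :
    ∃ E : ℝ, ∀ᶠ m : ℕ in atTop,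
      volume (⋃ (k : ι → ℕ) (_ : ∀ i, 0 < k i), solutionExponents a t m k) ≤
        ENNReal.ofReal (E * (m : ℝ) ^ (Fintype.card ι + 1 - t / 2)) := by
  classical
  obtain ⟨E, hvol⟩ := exists_eventually_volume_solutionExponents_le ha (one_pos.trans_le ht)
  obtain ⟨K, hK⟩ := exists_eventually_forall_base_le ha ht
  refine ⟨K ^ Fintype.card ι * E, ?_⟩
  filter_upwards [eventually_gt_atTop 0, hvol, hK] with m hm hvol hK
  set box : Finset (ι → ℕ) := Fintype.piFinset fun _ => Icc 1 (K * m)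
  have hcard : #box = (K * m) ^ Fintype.card ι := by
    simp only [box, Fintype.card_piFinset, Nat.card_Icc, Nat.add_sub_cancel, prod_const, card_univ]
  have hsubset : (⋃ (k : ι → ℕ) (_ : ∀ i, 0 < k i), solutionExponents a t m k) ⊆
      ⋃ k ∈ box, solutionExponents a t m k :=
    Set.iUnion_subset fun k => Set.iUnion_subset fun hk α hα => Set.mem_biUnion
      (Fintype.mem_piFinset.mpr fun i => mem_Icc.mpr ⟨hk i, hK k ⟨α, hα⟩ i⟩) hα
  calc volume (⋃ (k : ι → ℕ) (_ : ∀ i, 0 < k i), solutionExponents a t m k)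
      ≤ ∑ k ∈ box, volume (solutionExponents a t m k) :=
        (measure_mono hsubset).trans (measure_biUnion_finset_le _ _)
    _ ≤ ∑ _k ∈ box, ENNReal.ofReal (E * (m : ℝ) ^ (1 - t / 2)) :=
        sum_le_sum fun k hk =>
          hvol k fun i => (mem_Icc.mp (Fintype.mem_piFinset.mp hk i)).1
    _ = ENNReal.ofReal (K ^ Fintype.card ι * E * (m : ℝ) ^ (Fintype.card ι + 1 - t / 2)) := by
      rw [sum_const, hcard, ← ENNReal.ofReal_nsmul, nsmul_eq_mul, add_sub_assoc,
        Real.rpow_add (by positivity), Real.rpow_natCast]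
      push_cast
      ring_nf

lemma finite_nontrivialSolutions_of_eventually (ha : ∀ i, 0 < a i) {t α : ℝ} (hα : 0 ≤ α)
    (htα : t < α)
    (h : ∀ᶠ m : ℕ in atTop, α ∉ ⋃ (k : ι → ℕ) (_ : ∀ i, 0 < k i), solutionExponents a t m k) :
    (nontrivialSolutions a α).Finite := by
  obtain ⟨N, hN⟩ := eventually_atTop.mp h
  refine ((Set.finite_lt_nat N).biUnion fun m _ => (Set.finite_singleton ⌊(m : ℝ) ^ α⌋).prod
    (finite_setOf_nonneg_eq_sum_mul ha (⌊(m : ℝ) ^ α⌋ : ℝ))).subset ?_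
  rintro ⟨y, x⟩ hsol
  obtain ⟨⟨m, -, rfl⟩, hx, heq, -⟩ := id hsol
  have hm : m < N := by
    by_contra! hNm
    choose k hk hxk using hx
    obtain rfl : x = fun i => ⌊(k i : ℝ) ^ α⌋ := funext hxk
    exact hN m hNm (Set.mem_iUnion₂.mpr ⟨k, hk, htα, hsol⟩)
  exact Set.mem_biUnion hm
    ⟨rfl, fun i => zero_le_one.trans (one_le_of_mem_PS hα (hx i)), heq⟩

lemma ae_lt_imp_finite_nontrivialSolutions (ha : ∀ i, 0 < a i) {t : ℝ}
    (ht : 2 * (Fintype.card ι : ℝ) + 4 < t) :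
    ∀ᵐ α : ℝ, t < α → (nontrivialSolutions a α).Finite := by
  have ht1 : 1 ≤ t := by linarith [(Fintype.card ι).cast_nonneg (α := ℝ)]
  obtain ⟨E, hE⟩ := exists_eventually_volume_iUnion_solutionExponents_le ha ht1
  have hsummable : Summable fun m : ℕ => E * (m : ℝ) ^ (Fintype.card ι + 1 - t / 2) :=
    (Real.summable_nat_rpow.mpr (by linarith)).mul_left E
  filter_upwards [ae_eventually_notMem_of_eventually_measure_le hsummable hE] with α hα htα
  exact finite_nontrivialSolutions_of_eventually ha (by linarith) htα hα

end PiatetskiShapiro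

theorem statement5_general {ι : Type*} [Fintype ι] (a : ι → ℝ) (ha : ∀ i, 0 < a i) :
    ∀ᵐ α : ℝ, 2 * (Fintype.card ι : ℝ) + 4 < α → (nontrivialSolutions a α).Finite := by
  have hrat : ∀ᵐ α : ℝ, ∀ t : ℚ, 2 * (Fintype.card ι : ℝ) + 4 < t → t < α →
      (nontrivialSolutions a α).Finite :=
    ae_all_iff.mpr fun _ => eventually_imp_distrib_left.mpr
      (ae_lt_imp_finite_nontrivialSolutions ha)
  filter_upwards [hrat] with α hα hlt
  obtain ⟨t, hcard_lt, htα⟩ := exists_rat_btwn hlt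
  exact hα t hcard_lt htα

/-- For positive reals `a₁, …, aₙ` and almost every `α > 3n + 4`, the equation
`y = a₁x₁ + ⋯ + aₙxₙ` has at most finitely many non-trivial solutions in
`PS(α)^{n+1}`. -/
theorem statement5 (n : ℕ) (hn : 1 ≤ n) (a : Fin n → ℝ) (ha : ∀ i, 0 < a i) :
    volume {α : ℝ | 3 * (n : ℝ) + 4 < α ∧
      {sol : ℤ × (Fin n → ℤ) |
        sol.1 ∈ PS α ∧ (∀ i, sol.2 i ∈ PS α) ∧
        (sol.1 : ℝ) = ∑ i, a i * (sol.2 i : ℝ) ∧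
        ¬(∑ i, a i = 1 ∧ ∀ i, sol.2 i = sol.1)}.Infinite} = 0 := by
  exact measure_eq_zero_iff_ae_notMem.mpr ((statement5_general a ha).mono fun α hfin hα =>
    hα.2 (hfin (by rw [Fintype.card_fin]; linarith [hα.1, n.cast_nonneg (α := ℝ)])))
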